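/- The set of bounded linear operators on a C(K)-space having the Bishop property (B) need not be a right ideal: there exist a compact Hausdorff space K and bounded linear operators S, T : C(K) → C(K) such that T has the Bishop property (B) but the composition T ∘ S does not have the Bishop property (B). -/

import Mathlib

/-! A compact locally connected space `M` gives every operator factoring through a restriction `C(K)
→ C(M)` the property (B): up to `ε`, a function `f ≺ g` is determined by which of the finitely many
components of `{g ≠ 0}` meeting `{ε ≤ |g|}` it vanishes on, so the functions below a fixed `g` are
totally bounded on `M`, while an uncountable chain has a member with infinitely many predecessors.
On the other hand every Banach space embeds isometrically into `C(M)` for some compact convex, hence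
locally connected, `M`, namely the dual ball. If `L` fails (B), then on `C(L × M)` let `T` restrict
to a slice `{x₀} × M` and `S` transfer the functions on a slice `L × {y₀}` to functions on `M` by
this embedding. Then `T` has (B), but `T ∘ S = S` is isometric on a copy of `C(L)`. -/

open Set Topology Filter

/-- `f ≺ g`: `f ≠ g` and `f` agrees with `g` on the support of `f` (the closure of
the set where `f` is nonzero). -/
def Prec {K : Type*} [TopologicalSpace K] (f g : C(K, ℝ)) : Prop :=
  f ≠ g ∧ ∀ t ∈ closure {t | f t ≠ 0}, f t = g t

/-- `f ≺_δ g`: `f ≺ g` and `‖f - g‖ ≥ δ`. -/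
def PrecDelta {K : Type*} [TopologicalSpace K] [CompactSpace K] (δ : ℝ) (f g : C(K, ℝ)) : Prop :=
  Prec f g ∧ δ ≤ ‖f - g‖

/-- `F` is a `δ`-`≺`-chain. -/
def IsPrecChain {K : Type*} [TopologicalSpace K] [CompactSpace K] (δ : ℝ)
    (F : Set C(K, ℝ)) : Prop :=
  ∀ f ∈ F, ∀ g ∈ F, f ≠ g → PrecDelta δ f g ∨ PrecDelta δ g f

/-- A compact Hausdorff space has the Bishop property (B) if for every `δ > 0`
every `δ`-`≺`-chain in `C(K)` is countable. -/
def HasBishop (K : Type*) [TopologicalSpace K] [CompactSpace K] [T2Space K] : Prop :=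
  ∀ δ : ℝ, 0 < δ → ∀ F : Set C(K, ℝ), IsPrecChain δ F → F.Countable

/-- A bounded linear operator `T` from `C(K)` to a Banach space `X` has the Bishop
property (B) if `inf {‖Tf - Tg‖ : f, g ∈ F, f ≺ g} = 0` for every norm-bounded
uncountable `≺`-chain `F ⊆ C(K)`. -/
def OpHasBishop {K : Type*} [TopologicalSpace K] [CompactSpace K]
    {X : Type*} [NormedAddCommGroup X] [NormedSpace ℝ X]
    (T : C(K, ℝ) →L[ℝ] X) : Prop :=
  ∀ F : Set C(K, ℝ),
    (∀ f ∈ F, ∀ g ∈ F, f ≠ g → Prec f g ∨ Prec g f) →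
    ¬ F.Countable → (∃ C : ℝ, ∀ f ∈ F, ‖f‖ ≤ C) →
    sInf {r : ℝ | ∃ f ∈ F, ∃ g ∈ F, Prec f g ∧ r = ‖T f - T g‖} = 0

lemma prec_iff_eqOn_tsupport {K : Type*} [TopologicalSpace K] {f g : C(K, ℝ)} :
    Prec f g ↔ f ≠ g ∧ EqOn f g (tsupport f) :=
  Iff.rfl

section EqOnTsupport

variable {K L β : Type*} [TopologicalSpace K] [TopologicalSpace L] [Zero β] {f g : L → β}

lemma eqOn_tsupport_comp (h : EqOn f g (tsupport f)) {p : K → L} (hp : Continuous p) :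
    EqOn (f ∘ p) (g ∘ p) (tsupport (f ∘ p)) := fun _ ht ↦
  h (tsupport_comp_subset_preimage f hp ht)

lemma eq_zero_or_eq_of_eqOn_tsupport (h : EqOn f g (tsupport f)) (t : L) : f t = 0 ∨ f t = g t :=
  or_iff_not_imp_left.2 fun ht ↦ h (subset_tsupport f ht)

variable [TopologicalSpace β] [T1Space β] {W : Set L}

lemma eqOn_zero_or_eqOn_of_isPreconnected (hf : Continuous f) (h : EqOn f g (tsupport f))
    (hW : IsPreconnected W) (hg : ∀ t ∈ W, g t ≠ 0) : EqOn f 0 W ∨ EqOn f g W := by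
  have hopen : IsOpen (Function.support f) := isClosed_singleton.isOpen_compl.preimage hf
  have hclosed : closure (Function.support f) ∩ W ⊆ Function.support f := fun t ht ↦ by
    simpa only [Function.mem_support, h ht.1] using hg t ht.2
  rcases (W ∩ Function.support f).eq_empty_or_nonempty with hempty | hne
  · exact Or.inl fun t ht ↦ by_contra fun hft ↦ hempty.subset ⟨ht, hft⟩
  · exact Or.inr fun t ht ↦ h (subset_tsupport f
      (hW.subset_of_closure_inter_subset hopen hne hclosed ht))

lemma eqOn_of_isPreconnected_of_eq_zero_iff {f₁ f₂ : L → β} (hf₁ : Continuous f₁)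
    (hf₂ : Continuous f₂) (h₁ : EqOn f₁ g (tsupport f₁)) (h₂ : EqOn f₂ g (tsupport f₂))
    (hW : IsPreconnected W) (hg : ∀ t ∈ W, g t ≠ 0) {x : L} (hx : x ∈ W)
    (hzero : f₁ x = 0 ↔ f₂ x = 0) : EqOn f₁ f₂ W := by
  rcases eqOn_zero_or_eqOn_of_isPreconnected hf₁ h₁ hW hg with e₁ | e₁ <;>
    rcases eqOn_zero_or_eqOn_of_isPreconnected hf₂ h₂ hW hg with e₂ | e₂
  · exact e₁.trans e₂.symm
  · exact absurd ((e₂ hx).symm.trans (hzero.1 (e₁ hx))) (hg x hx)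
  · exact absurd ((e₁ hx).symm.trans (hzero.2 (e₂ hx))) (hg x hx)
  · exact e₁.trans e₂.symm

end EqOnTsupport

lemma Prec.comp_of_surjective {K L : Type*} [TopologicalSpace K] [TopologicalSpace L]
    {f g : C(L, ℝ)} (h : Prec f g) {p : C(K, L)} (hp : Function.Surjective p) :
    Prec (f.comp p) (g.comp p) :=
  prec_iff_eqOn_tsupport.2 ⟨fun hfg ↦ h.1 ((ContinuousMap.cancel_right hp).1 hfg),
    eqOn_tsupport_comp (prec_iff_eqOn_tsupport.1 h).2 p.continuous⟩

lemma isometry_comp_of_surjective {K L X : Type*} [TopologicalSpace K] [CompactSpace K]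
    [TopologicalSpace L] [CompactSpace L] [PseudoMetricSpace X] {p : C(K, L)}
    (hp : Function.Surjective p) : Isometry fun f : C(L, X) ↦ f.comp p :=
  .of_dist_eq fun f g ↦ by
    simpa only [ContinuousMap.dist_eq_iSup, ContinuousMap.comp_apply] using
      hp.iSup_comp fun t ↦ dist (f t) (g t)

section TotallyBounded

variable {M E : Type*} [TopologicalSpace M] [CompactSpace M] [LocallyConnectedSpace M]
  [NormedAddCommGroup E]

lemma exists_finset_subset_iUnion_connectedComponentIn_ne_zero (g : C(M, E)) {ε : ℝ} (hε : 0 < ε) :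
    ∃ s : Finset M, {t | ε ≤ ‖g t‖} ⊆ ⋃ x ∈ s, connectedComponentIn {t | g t ≠ 0} x := by
  have hcompact : IsCompact {t | ε ≤ ‖g t‖} :=
    (isClosed_le continuous_const g.continuous.norm).isCompact
  have hopen : IsOpen {t | g t ≠ 0} := isOpen_ne_fun g.continuous continuous_const
  obtain ⟨s, -, hs⟩ := hcompact.elim_nhds_subcover (connectedComponentIn {t | g t ≠ 0})
    fun x hx ↦ hopen.connectedComponentIn.mem_nhds
      (mem_connectedComponentIn (norm_pos_iff.1 (hε.trans_le hx)))
  exact ⟨s, hs⟩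

theorem totallyBounded_setOf_eqOn_tsupport (g : C(M, E)) :
    TotallyBounded {f : C(M, E) | EqOn f g (tsupport f)} := by
  refine Metric.totallyBounded_of_finite_discretization fun ε hε ↦ ?_
  obtain ⟨s, hs⟩ := exists_finset_subset_iUnion_connectedComponentIn_ne_zero g hε
  refine ⟨ULift (Set s), inferInstance, fun f ↦ ⟨{x | f.1 x = 0}⟩, fun ⟨f₁, h₁⟩ ⟨f₂, h₂⟩ heq ↦ ?_⟩
  refine (ContinuousMap.dist_lt_iff hε).2 fun t ↦ ?_
  rcases lt_or_ge ‖g t‖ ε with hsmall | hlarge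
  · rcases eq_zero_or_eq_of_eqOn_tsupport h₁ t with e₁ | e₁ <;>
      rcases eq_zero_or_eq_of_eqOn_tsupport h₂ t with e₂ | e₂ <;>
      simpa [e₁, e₂] using by assumption
  · obtain ⟨x, hxs, hxt⟩ := mem_iUnion₂.1 (hs hlarge)
    have hx : x ∈ connectedComponentIn {t | g t ≠ 0} x :=
      mem_connectedComponentIn (connectedComponentIn_nonempty_iff.1 ⟨t, hxt⟩)
    have hzero : f₁ x = 0 ↔ f₂ x = 0 := Set.ext_iff.1 (ULift.up_injective heq) ⟨x, hxs⟩
    have heq_t : f₁ t = f₂ t :=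
      eqOn_of_isPreconnected_of_eq_zero_iff f₁.continuous f₂.continuous h₁ h₂
        isPreconnected_connectedComponentIn (connectedComponentIn_subset _ _) hx hzero hxt
    simpa only [heq_t, dist_self] using hε

end TotallyBounded

lemma exists_ne_dist_lt_of_totallyBounded {X ι : Type*} [PseudoMetricSpace X] [Infinite ι]
    {s : Set X} (hs : TotallyBounded s) {u : ι → X} (hu : ∀ i, u i ∈ s) {ε : ℝ} (hε : 0 < ε) :
    ∃ i j, i ≠ j ∧ dist (u i) (u j) < ε := by
  obtain ⟨c, hc, hsc⟩ := Metric.totallyBounded_iff.1 hs (ε / 2) (half_pos hε)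
  have := hc.to_subtype
  have hnear (i : ι) : ∃ y : c, dist (u i) y < ε / 2 := by
    simpa using hsc (hu i)
  choose y hy using hnear
  obtain ⟨i, j, hij, hyij⟩ := Finite.exists_ne_map_eq_of_infinite y
  refine ⟨i, j, hij, (dist_triangle_right _ _ (y i : X)).trans_lt ?_⟩
  exact (add_lt_add (hy i) (hyij ▸ hy j)).trans_eq (add_halves ε)

lemma exists_infinite_setOf_rel_of_isChain {α : Type*} {r : α → α → Prop} {F : Set α}
    (hF : IsChain r F) (hunc : ¬ F.Countable) : ∃ g ∈ F, {f ∈ F | r f g}.Infinite := by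
  by_contra! hfin
  obtain ⟨D, hDF, hDcount, hDinf⟩ :=
    Set.Infinite.exists_subset_countable_infinite fun h ↦ hunc h.countable
  have hcount : (D ∪ ⋃ d ∈ D, {f ∈ F | r f d}).Countable :=
    hDcount.union (hDcount.biUnion fun d hd ↦ (hfin d (hDF hd)).countable)
  obtain ⟨g, hgF, hg⟩ := not_subset.1 fun h ↦ hunc (hcount.mono h)
  simp only [mem_union, mem_iUnion, not_or, not_exists] at hg
  refine hDinf ((hfin g hgF).subset fun d hd ↦ ⟨hDF hd, ?_⟩)
  exact (hF (hDF hd) hgF (ne_of_mem_of_not_mem hd hg.1)).resolve_right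
    fun hgd ↦ hg.2 d hd ⟨hgF, hgd⟩

section OpHasBishop

variable {K L M : Type*} [TopologicalSpace K] [CompactSpace K] [TopologicalSpace L] [CompactSpace L]
  [TopologicalSpace M] [CompactSpace M] {X Y : Type*} [NormedAddCommGroup X] [NormedSpace ℝ X]
  [NormedAddCommGroup Y] [NormedSpace ℝ Y]

lemma opHasBishop_iff {T : C(K, ℝ) →L[ℝ] X} :
    OpHasBishop T ↔ ∀ F : Set C(K, ℝ), IsChain Prec F → ¬ F.Countable → Bornology.IsBounded F →
      ∀ ε > 0, ∃ f ∈ F, ∃ g ∈ F, f ≠ g ∧ dist (T f) (T g) < ε := by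
  simp only [isBounded_iff_forall_norm_le]
  refine forall_congr' fun F ↦ forall_congr' fun hF ↦ forall₂_congr fun hunc _ ↦ ?_
  set R := {r : ℝ | ∃ f ∈ F, ∃ g ∈ F, Prec f g ∧ r = ‖T f - T g‖}
  have hR_nonneg : ∀ r ∈ R, 0 ≤ r := by
    rintro _ ⟨f, -, g, -, -, rfl⟩
    exact norm_nonneg _
  have hR {f g : C(K, ℝ)} (hf : f ∈ F) (hg : g ∈ F) (hfg : f ≠ g) : dist (T f) (T g) ∈ R := by
    rcases hF f hf g hg hfg with h | h
    · exact ⟨f, hf, g, hg, h, dist_eq_norm _ _⟩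
    · exact ⟨g, hg, f, hf, h, by rw [dist_comm, dist_eq_norm]⟩
  constructor
  · intro hinf ε hε
    obtain ⟨f, hf, g, hg, hfg⟩ := not_subsingleton_iff.1 fun h ↦ hunc h.countable
    obtain ⟨_, ⟨f, hf, g, hg, h, rfl⟩, hlt⟩ :=
      exists_lt_of_csInf_lt ⟨_, hR hf hg hfg⟩ (hinf.trans_lt hε)
    exact ⟨f, hf, g, hg, h.1, (dist_eq_norm _ _).trans_lt hlt⟩
  · intro h
    refine le_antisymm (le_of_forall_pos_le_add fun ε hε ↦ ?_) (Real.sInf_nonneg hR_nonneg)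
    obtain ⟨f, hf, g, hg, hfg, hlt⟩ := h ε hε
    rw [zero_add]
    exact (csInf_le ⟨0, hR_nonneg⟩ (hR hf hg hfg)).trans hlt.le

lemma OpHasBishop.clm_comp {T : C(K, ℝ) →L[ℝ] X} (hT : OpHasBishop T) (U : X →L[ℝ] Y) :
    OpHasBishop (U.comp T) := by
  rw [opHasBishop_iff] at hT ⊢
  intro F hF hunc hbdd ε hε
  obtain ⟨δ, hδ, hU⟩ := Metric.uniformContinuous_iff.1 U.uniformContinuous ε hε
  obtain ⟨f, hf, g, hg, hfg, hlt⟩ := hT F hF hunc hbdd δ hδ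
  exact ⟨f, hf, g, hg, hfg, hU hlt⟩

lemma OpHasBishop.comp_compCLM {U : C(K, ℝ) →L[ℝ] X} (hU : OpHasBishop U) {p : C(K, L)}
    (hp : Function.Surjective p) : OpHasBishop (U.comp (p.compCLM ℝ ℝ)) := by
  rw [opHasBishop_iff] at hU ⊢
  intro F hF hunc hbdd ε hε
  have hiso : Isometry (p.compCLM ℝ ℝ) := isometry_comp_of_surjective hp
  have hF' : IsChain Prec (p.compCLM ℝ ℝ '' F) :=
    hF.image_of_map_rel _ _ _ fun _ _ h ↦ h.comp_of_surjective hp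
  obtain ⟨_, ⟨f, hf, rfl⟩, _, ⟨g, hg, rfl⟩, hfg, hlt⟩ := hU _ hF'
    (fun h ↦ hunc (countable_of_injective_of_countable_image hiso.injective.injOn h))
    (hiso.lipschitz.isBounded_image hbdd) ε hε
  exact ⟨f, hf, g, hg, ne_of_apply_ne _ hfg, hlt⟩

theorem opHasBishop_compCLM [LocallyConnectedSpace M] (p : C(M, K)) :
    OpHasBishop (p.compCLM ℝ ℝ) := by
  refine opHasBishop_iff.2 fun F hF hunc _ ε hε ↦ ?_
  obtain ⟨g, -, hinf⟩ := exists_infinite_setOf_rel_of_isChain hF hunc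
  have := hinf.to_subtype
  have hbelow (f : {f ∈ F | Prec f g}) : EqOn (f.1.comp p) (g.comp p) (tsupport (f.1.comp p)) :=
    eqOn_tsupport_comp (prec_iff_eqOn_tsupport.1 f.2.2).2 p.continuous
  obtain ⟨⟨f₁, hf₁, _⟩, ⟨f₂, hf₂, _⟩, hne, hlt⟩ :=
    exists_ne_dist_lt_of_totallyBounded (totallyBounded_setOf_eqOn_tsupport (g.comp p)) hbelow hε
  exact ⟨f₁, hf₁, f₂, hf₂, fun heq ↦ hne (Subtype.ext heq), hlt⟩

theorem OpHasBishop.hasBishop_of_antilipschitzWith [T2Space K] {U : C(K, ℝ) →L[ℝ] X}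
    (hU : OpHasBishop U) {c : NNReal} (hc : AntilipschitzWith c U) : HasBishop K := by
  intro δ hδ F hF
  by_contra hunc
  obtain ⟨n, hn⟩ : ∃ n : ℕ, ¬ (F ∩ Metric.closedBall 0 n).Countable := by
    by_contra! h
    refine hunc ?_
    rw [← inter_univ F, ← Metric.iUnion_closedBall_nat 0, inter_iUnion]
    exact countable_iUnion h
  have hchain : IsChain Prec (F ∩ Metric.closedBall 0 n) := fun f hf g hg hfg ↦
    (hF f hf.1 g hg.1 hfg).imp And.left And.left
  obtain ⟨f, hf, g, hg, hfg, hlt⟩ := opHasBishop_iff.1 hU _ hchain hn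
    (Metric.isBounded_closedBall.subset inter_subset_right) (δ / (c + 1)) (by positivity)
  have hsep : δ ≤ dist f g := by
    rcases hF f hf.1 g hg.1 hfg with h | h
    · exact h.2.trans_eq (dist_eq_norm _ _).symm
    · exact h.2.trans_eq (by rw [dist_comm, dist_eq_norm])
  refine hsep.not_gt ?_
  calc dist f g ≤ c * dist (U f) (U g) := hc.le_mul_dist f g
    _ ≤ (c + 1) * dist (U f) (U g) := by gcongr; simp
    _ < (c + 1) * (δ / (c + 1)) := by gcongr
    _ = δ := mul_div_cancel₀ _ (by positivity)

end OpHasBishop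

section Clopens

open TopologicalSpace

variable {K : Type*} [TopologicalSpace K]

/-- The indicator function of a clopen set, as a continuous real-valued function. -/
noncomputable def clopenIndicator (U : Clopens K) : C(K, ℝ) :=
  (LocallyConstant.charFn ℝ U.isClopen).toContinuousMap

lemma clopenIndicator_of_mem {U : Clopens K} {t : K} (ht : t ∈ U) : clopenIndicator U t = 1 :=
  (LocallyConstant.charFn_eq_one ℝ t U.isClopen).2 ht

lemma clopenIndicator_of_notMem {U : Clopens K} {t : K} (ht : t ∉ U) : clopenIndicator U t = 0 :=
  (LocallyConstant.charFn_eq_zero ℝ t U.isClopen).2 ht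

lemma tsupport_clopenIndicator (U : Clopens K) : tsupport (clopenIndicator U) = U := by
  have hsupp : Function.support (clopenIndicator U) = U := by
    simp [clopenIndicator, LocallyConstant.coe_charFn]
  rw [tsupport, hsupp, U.isClopen.isClosed.closure_eq]

lemma precDelta_one_clopenIndicator [CompactSpace K] {U V : Clopens K} (h : U < V) :
    PrecDelta 1 (clopenIndicator U) (clopenIndicator V) := by
  obtain ⟨t, htV, htU⟩ := SetLike.exists_of_lt h
  have hnorm : 1 ≤ ‖clopenIndicator U - clopenIndicator V‖ := by
    simpa [clopenIndicator_of_mem htV, clopenIndicator_of_notMem htU] using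
      (clopenIndicator U - clopenIndicator V).norm_coe_le_norm t
  refine ⟨prec_iff_eqOn_tsupport.2 ⟨fun heq ↦ ?_, fun s hs ↦ ?_⟩, hnorm⟩
  · norm_num [heq] at hnorm
  · rw [tsupport_clopenIndicator] at hs
    rw [clopenIndicator_of_mem hs, clopenIndicator_of_mem (h.le hs)]

theorem HasBishop.countable_of_strictMono [CompactSpace K] [T2Space K] (hK : HasBishop K)
    {ι : Type*} [LinearOrder ι] {U : ι → Clopens K} (hU : StrictMono U) : Countable ι := by
  have hprec {i j : ι} (hij : i < j) :
      PrecDelta 1 (clopenIndicator (U i)) (clopenIndicator (U j)) :=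
    precDelta_one_clopenIndicator (hU hij)
  have hinj : Function.Injective (clopenIndicator ∘ U) :=
    Function.Injective.of_lt_imp_ne fun _ _ hij ↦ (hprec hij).1.1
  have hchain : IsPrecChain 1 (range (clopenIndicator ∘ U)) := by
    rintro _ ⟨i, rfl⟩ _ ⟨j, rfl⟩ hij
    exact (ne_of_apply_ne (clopenIndicator ∘ U) hij).lt_or_gt.imp hprec hprec
  have hcount := (hK 1 one_pos _ hchain).preimage hinj
  rwa [preimage_range, countable_univ_iff] at hcount

/-- The clopen subset of the Stone–Čech compactification of the discrete space `α` that is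
determined by `s ⊆ α`. -/
def ultrafilterClopens {α : Type*} (s : Set α) : Clopens (Ultrafilter α) :=
  ⟨{u | s ∈ u}, ultrafilter_isClosed_basic s, ultrafilter_isOpen_basic s⟩

lemma ultrafilterClopens_strictMono {α : Type*} :
    StrictMono (ultrafilterClopens : Set α → Clopens (Ultrafilter α)) :=
  Monotone.strictMono_of_injective (fun _ _ hst _ hs ↦ mem_of_superset hs hst) fun _ _ h ↦
    Set.ext fun x ↦ SetLike.ext_iff.1 h (pure x)

theorem not_hasBishop_ultrafilter (α : Type*) [Uncountable α] [LinearOrder α] :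
    ¬ HasBishop (Ultrafilter α) := fun h ↦
  not_countable (h.countable_of_strictMono
    (ultrafilterClopens_strictMono.comp fun _ _ ↦ Iio_ssubset_Iio))

end Clopens

section DualBall

variable (E : Type*) [SeminormedAddCommGroup E] [NormedSpace ℝ E]

/-- The closed unit ball of the dual of `E` with the weak-* topology. -/
abbrev DualBall : Type _ :=
  (WeakDual.toStrongDual ⁻¹' Metric.closedBall (0 : StrongDual ℝ E) 1 : Set (WeakDual ℝ E))

instance : CompactSpace (DualBall E) :=
  isCompact_iff_compactSpace.1 (WeakDual.isCompact_closedBall 0 1)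

instance : LocallyConnectedSpace (DualBall E) := by
  have : LocallyConvexSpace ℝ (WeakDual ℝ E) :=
    inferInstanceAs (LocallyConvexSpace ℝ (WeakBilin _))
  have hconv : Convex ℝ (WeakDual.toStrongDual ⁻¹' Metric.closedBall (0 : StrongDual ℝ E) 1) :=
    (convex_closedBall _ _).linear_preimage
      (WeakDual.toStrongDual (𝕜 := ℝ) (E := E)).toLinearMap
  have := hconv.locallyPathConnectedSpace
  infer_instance

instance : Nonempty (DualBall E) :=
  ⟨⟨0, by simp⟩⟩

variable {E}

/-- Evaluation at a vector `x`, as a continuous function on the dual ball. -/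
noncomputable def dualBallEval (x : E) : C(DualBall E, ℝ) :=
  ⟨fun φ ↦ φ.1 x, (WeakDual.eval_continuous x).comp continuous_subtype_val⟩

lemma norm_dualBallEval (x : E) : ‖dualBallEval x‖ = ‖x‖ := by
  refine le_antisymm ((ContinuousMap.norm_le _ (norm_nonneg x)).2 fun φ ↦ ?_) ?_
  · have hφ : ‖WeakDual.toStrongDual φ.1‖ ≤ 1 := mem_closedBall_zero_iff.1 φ.2
    exact ((WeakDual.toStrongDual φ.1).le_of_opNorm_le hφ x).trans_eq (one_mul _)
  · obtain ⟨φ, hφ, hφx⟩ := exists_dual_vector'' ℝ x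
    let φ' : DualBall E := ⟨StrongDual.toWeakDual φ, mem_closedBall_zero_iff.2 hφ⟩
    calc ‖x‖ = dualBallEval x φ' := hφx.symm
      _ ≤ ‖dualBallEval x‖ := ContinuousMap.apply_le_norm _ _

/-- The canonical isometric embedding of `E` into the continuous functions on its dual ball, which
realises every Banach space as a space of functions on a locally connected compact space. -/
noncomputable def dualBallEvalₗᵢ : E →ₗᵢ[ℝ] C(DualBall E, ℝ) where
  toFun := dualBallEval
  map_add' x y := ContinuousMap.ext fun φ ↦ map_add φ.1 x y
  map_smul' c x := ContinuousMap.ext fun φ ↦ map_smul φ.1 c x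
  norm_map' := norm_dualBallEval

end DualBall

section Slice

variable {L M : Type*} [TopologicalSpace L] [TopologicalSpace M]

/-- The projection of `C(L × M)` sending `f` to `(x, y) ↦ f (x₀, y)`. -/
noncomputable def sliceProj (x₀ : L) : C(L × M, ℝ) →L[ℝ] C(L × M, ℝ) :=
  (ContinuousMap.snd.compCLM ℝ ℝ).comp
    (((ContinuousMap.const M x₀).prodMk (.id M)).compCLM ℝ ℝ)

variable [CompactSpace L] [CompactSpace M]

/-- The operator on `C(L × M)` that restricts a function to the slice `L × {y₀}`, transfers it to
a function on `M` by `e`, and regards the result as a function on `L × M`. -/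
noncomputable def sliceTransfer (e : C(L, ℝ) →ₗᵢ[ℝ] C(M, ℝ)) (y₀ : M) :
    C(L × M, ℝ) →L[ℝ] C(L × M, ℝ) :=
  (ContinuousMap.snd.compCLM ℝ ℝ).comp
    (e.toContinuousLinearMap.comp
      (((ContinuousMap.id L).prodMk (.const L y₀)).compCLM ℝ ℝ))

lemma sliceProj_comp_sliceTransfer (x₀ : L) (e : C(L, ℝ) →ₗᵢ[ℝ] C(M, ℝ)) (y₀ : M) :
    (sliceProj x₀).comp (sliceTransfer e y₀) = sliceTransfer e y₀ :=
  rfl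

theorem opHasBishop_sliceProj [LocallyConnectedSpace M] (x₀ : L) :
    OpHasBishop (sliceProj x₀ : C(L × M, ℝ) →L[ℝ] C(L × M, ℝ)) :=
  (opHasBishop_compCLM _).clm_comp _

lemma isometry_sliceTransfer_comp_compCLM_fst [Nonempty L] (e : C(L, ℝ) →ₗᵢ[ℝ] C(M, ℝ)) (y₀ : M) :
    Isometry ((sliceTransfer e y₀).comp (ContinuousMap.fst.compCLM ℝ ℝ)) :=
  (isometry_comp_of_surjective (p := ContinuousMap.snd) Prod.snd_surjective).comp e.isometry

theorem hasBishop_of_opHasBishop_sliceTransfer [T2Space L] [Nonempty L]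
    {e : C(L, ℝ) →ₗᵢ[ℝ] C(M, ℝ)} {y₀ : M} (h : OpHasBishop (sliceTransfer e y₀)) : HasBishop L :=
  have : Nonempty M := ⟨y₀⟩
  (h.comp_compCLM (p := ContinuousMap.fst) Prod.fst_surjective).hasBishop_of_antilipschitzWith
    (isometry_sliceTransfer_comp_compCLM_fst e y₀).antilipschitz

end Slice

theorem stmt19_general {L : Type*} [TopologicalSpace L] [CompactSpace L] [T2Space L]
    (hL : ¬ HasBishop L) :
    ∃ S T : C(L × DualBall C(L, ℝ), ℝ) →L[ℝ] C(L × DualBall C(L, ℝ), ℝ),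
      OpHasBishop T ∧ ¬ OpHasBishop (T.comp S) := by
  have hL_nonempty : Nonempty L :=
    not_isEmpty_iff.1 fun _ ↦ hL fun _ _ F _ ↦ F.subsingleton_of_subsingleton.countable
  let x₀ : L := Classical.arbitrary L
  let y₀ : DualBall C(L, ℝ) := Classical.arbitrary _
  refine ⟨sliceTransfer dualBallEvalₗᵢ y₀, sliceProj x₀, opHasBishop_sliceProj x₀, fun h ↦ hL ?_⟩
  rw [sliceProj_comp_sliceTransfer] at h
  exact hasBishop_of_opHasBishop_sliceTransfer h

/-- **Example 4.2.** The set of operators on a `C(K)`-space having the Bishop property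
(B) need not be a right ideal: there are a compact Hausdorff space `K` and bounded
linear operators `S, T` on `C(K)` such that `T` has (B) but `T ∘ S` does not. -/
theorem stmt19 :
    ∃ (K : Type) (tK : TopologicalSpace K),
      letI := tK;
      ∃ (cK : CompactSpace K) (hK : T2Space K)
        (S T : C(K, ℝ) →L[ℝ] C(K, ℝ)),
        OpHasBishop T ∧ ¬ OpHasBishop (T.comp S) :=
  ⟨Ultrafilter ℝ × DualBall C(Ultrafilter ℝ, ℝ), inferInstance, inferInstance, inferInstance,
    stmt19_general (not_hasBishop_ultrafilter ℝ)⟩
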